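/- Let E, J, R, Q be real n×n matrices with Jᵀ = -J, R positive semidefinite, Q singular (not invertible), and Eᵀ * Q positive semidefinite, and assume the pair (E, (J-R)Q) is regular. Assume furthermore that no eigenvector of the pencil z E - (J-R)Q associated with a nonzero finite eigenvalue lies in the kernel of Qᵀ E, i.e., for all λ ∈ ℂ with λ ≠ 0 and all x ≠ 0 with (λ • Eℂ - ((J-R)*Q)ℂ) x = 0 one has (Qᵀ * E)ℂ x ≠ 0. Then every finite eigenvalue λ of the pencil z E - (J-R)Q satisfies Re(λ) ≤ 0. -/

import Mathlib

/-!
If `lam E x = (J - R) Q x`, pairing with `Q x` gives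
`lam * (x* Qᵀ E x) = y* J y - y* R y` with `y = Q x`. The matrix `Qᵀ E = Eᵀ Q` is positive
semidefinite, so the factor of `lam` is a nonnegative real; for `lam ≠ 0` it is nonzero because
`Qᵀ E x ≠ 0`. On the right, `y* J y` is purely imaginary and `y* R y ≥ 0`, so the real part is
nonpositive, and dividing gives `lam.re ≤ 0`.
-/

open Matrix
open scoped ComplexOrder

/-- A Gram factorisation `M = Bᴴ B` over `ℝ` is still one after complexification. -/
lemma posSemidef_map_complex {n : ℕ} {M : Matrix (Fin n) (Fin n) ℝ} (hM : M.PosSemidef) :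
    (M.map (algebraMap ℝ ℂ)).PosSemidef := by
  obtain ⟨B, rfl⟩ : ∃ B : Matrix (Fin n) (Fin n) ℝ, M = Bᴴ * B := by
    open scoped MatrixOrder in
    exact CStarAlgebra.nonneg_iff_eq_star_mul_self.mp hM.nonneg
  have h : (Bᴴ * B).map (algebraMap ℝ ℂ)
      = (B.map (algebraMap ℝ ℂ))ᴴ * B.map (algebraMap ℝ ℂ) := by
    rw [Matrix.map_mul]
    congr 1
    ext i j
    simp
  rw [h]
  exact posSemidef_conjTranspose_mul_self _

lemma re_skew_form_eq_zero {n : ℕ} {J : Matrix (Fin n) (Fin n) ℝ} (hJ : Jᵀ = -J)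
    (y : Fin n → ℂ) : (star y ⬝ᵥ (J.map (algebraMap ℝ ℂ) *ᵥ y)).re = 0 := by
  have hJc : (J.map (algebraMap ℝ ℂ))ᴴ = -J.map (algebraMap ℝ ℂ) := by
    ext i j
    have : J j i = -J i j := congrFun (congrFun hJ i) j
    simp [this]
  have h : star (star y ⬝ᵥ (J.map (algebraMap ℝ ℂ) *ᵥ y))
      = -(star y ⬝ᵥ (J.map (algebraMap ℝ ℂ) *ᵥ y)) := by
    conv_lhs => rw [star_dotProduct, star_star, star_mulVec, hJc, ← dotProduct_mulVec, neg_mulVec,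
      dotProduct_neg]
  have := congrArg Complex.re h
  simp only [Complex.star_def, Complex.conj_re, Complex.neg_re] at this
  linarith

/-- Singular `Q` variant: under the extra eigenvector condition, all finite eigenvalues of the
pencil `z E - (J-R)Q` lie in the closed left half-plane. -/
theorem dh_pair_singular_Q_eigenvalues_left_halfplane {n : ℕ}
    (E J R Q : Matrix (Fin n) (Fin n) ℝ)
    (hJ : Jᵀ = -J) (hR : R.PosSemidef) (hQ : ¬ IsUnit Q)
    (hEQ : (Eᵀ * Q).PosSemidef)
    (hreg : ∃ z : ℂ,
      (z • E.map (algebraMap ℝ ℂ) - ((J - R) * Q).map (algebraMap ℝ ℂ)).det ≠ 0)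
    (hvec : ∀ (z : ℂ) (x : Fin n → ℂ), z ≠ 0 → x ≠ 0 →
      (z • E.map (algebraMap ℝ ℂ) - ((J - R) * Q).map (algebraMap ℝ ℂ)) *ᵥ x = 0 →
      (Qᵀ * E).map (algebraMap ℝ ℂ) *ᵥ x ≠ 0) :
    ∀ (lam : ℂ) (x : Fin n → ℂ), x ≠ 0 →
      (lam • E.map (algebraMap ℝ ℂ) - ((J - R) * Q).map (algebraMap ℝ ℂ)) *ᵥ x = 0 →
      lam.re ≤ 0 := by
  intro lam x hx hlx
  by_cases hl : lam = 0
  · simp [hl]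
  have hne := hvec lam x hl hx hlx
  have hsymm : Qᵀ * E = Eᵀ * Q := by
    have h := hEQ.isHermitian.eq
    simpa [conjTranspose_eq_transpose_of_trivial, transpose_mul] using h
  rw [hsymm] at hne
  have hP := posSemidef_map_complex hEQ
  have hpos := hP.dotProduct_mulVec_nonneg x
  have hp0 : star x ⬝ᵥ ((Eᵀ * Q).map (algebraMap ℝ ℂ) *ᵥ x) ≠ 0 :=
    fun h => hne ((hP.dotProduct_mulVec_zero_iff x).mp h)
  have hRn := (posSemidef_map_complex hR).dotProduct_mulVec_nonneg
    (Q.map (algebraMap ℝ ℂ) *ᵥ x)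
  have hJ0 := re_skew_form_eq_zero hJ (Q.map (algebraMap ℝ ℂ) *ᵥ x)
  have hQt : (Q.map (algebraMap ℝ ℂ))ᴴ = Qᵀ.map (algebraMap ℝ ℂ) := by
    ext i j
    simp
  have hsub : (J - R).map (algebraMap ℝ ℂ)
      = J.map (algebraMap ℝ ℂ) - R.map (algebraMap ℝ ℂ) := by
    ext i j
    simp
  have key : lam * (star x ⬝ᵥ ((Eᵀ * Q).map (algebraMap ℝ ℂ) *ᵥ x))
      = star (Q.map (algebraMap ℝ ℂ) *ᵥ x) ⬝ᵥ
          (J.map (algebraMap ℝ ℂ) *ᵥ (Q.map (algebraMap ℝ ℂ) *ᵥ x))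
        - star (Q.map (algebraMap ℝ ℂ) *ᵥ x) ⬝ᵥ
          (R.map (algebraMap ℝ ℂ) *ᵥ (Q.map (algebraMap ℝ ℂ) *ᵥ x)) := by
    rw [sub_mulVec, sub_eq_zero, smul_mulVec, Matrix.map_mul, ← mulVec_mulVec, hsub,
      sub_mulVec] at hlx
    rw [← dotProduct_sub, ← hlx, dotProduct_smul, smul_eq_mul, star_mulVec, hQt,
      ← dotProduct_mulVec, mulVec_mulVec, ← Matrix.map_mul, hsymm]
  obtain ⟨hre, him⟩ := Complex.nonneg_iff.mp hpos
  have hre' : 0 < (star x ⬝ᵥ ((Eᵀ * Q).map (algebraMap ℝ ℂ) *ᵥ x)).re :=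
    lt_of_le_of_ne hre fun h => hp0 (Complex.ext h.symm him.symm)
  have hk := congrArg Complex.re key
  rw [Complex.mul_re, ← him, Complex.sub_re, hJ0, mul_zero, sub_zero, zero_sub] at hk
  have hR0 := (Complex.nonneg_iff.mp hRn).1
  by_contra! hlt
  have := mul_pos hlt hre'
  linarith
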